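/- Every finite set of n ≥ 2 distinct points in ℝ² admits an acute spanning path, i.e., an ordering p₁, p₂, …, p_n of the points (each appearing exactly once) such that ∠p_{i−1} p_i p_{i+1} ≤ π/2 for every 2 ≤ i ≤ n−1. Such a path can be obtained by starting from an arbitrary point and iteratively connecting the current point to a point farthest from it among the remaining points. -/

import Mathlib

open EuclideanGeometry Real

noncomputable section

abbrev Plane := EuclideanSpace ℝ (Fin 2)

/-!
If `c` lies in the closed ball about `a` whose boundary sphere passes through `b`, then this ball is
on one side of its tangent hyperplane at `b`, so `∠ a b c ≤ π / 2`. In a farthest-first ordering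
every later point lies in the ball about the current point through its successor.
-/

/-- `f 0, …, f (n - 1)` is a farthest-first (greedy) ordering: each point is followed by one that is
farthest from it among the points still to come. Only the values of `f` below `n` matter, since
`i < j < n` forces `i + 1 < n`. -/
def IsFarthestFirst {α : Type*} [Dist α] (n : ℕ) (f : ℕ → α) : Prop :=
  ∀ i j : ℕ, i < j → j < n → dist (f i) (f j) ≤ dist (f i) (f (i + 1))

section Prepend

variable {α : Type*} {n : ℕ} {p : α} {f : ℕ → α}

/-- The sequence `p, f 0, f 1, …`, which extends a greedy ordering by a new starting point. -/
def prepend (p : α) (f : ℕ → α) : ℕ → α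
  | 0 => p
  | i + 1 => f i

theorem bijOn_prepend {s : Set α} (hf : Set.BijOn f (Set.Iio n) s) (hp : p ∉ s) :
    Set.BijOn (prepend p f) (Set.Iio (n + 1)) (insert p s) := by
  have hIio : Set.Iio (n + 1) = insert 0 (Nat.succ '' Set.Iio n) := by
    ext (_ | i) <;> simp
  have hsucc : Set.BijOn (prepend p f) (Nat.succ '' Set.Iio n) s :=
    (Set.bijOn_comp_iff Nat.succ_injective.injOn).mp hf
  rw [hIio]
  exact hsucc.insert hp

theorem IsFarthestFirst.prepend [Dist α] (hf : IsFarthestFirst n f)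
    (hp : ∀ j < n, dist p (f j) ≤ dist p (f 0)) : IsFarthestFirst (n + 1) (prepend p f) := by
  rintro (_ | i) (_ | j) hij hj
  · exact absurd hij (lt_irrefl 0)
  · exact hp j (Nat.lt_of_succ_lt_succ hj)
  · exact absurd hij (Nat.not_lt_zero _)
  · exact hf i j (Nat.lt_of_succ_lt_succ hij) (Nat.lt_of_succ_lt_succ hj)

end Prepend

theorem exists_isFarthestFirst_bijOn {α : Type*} [Dist α] (s : Finset α) {p : α} (hp : p ∈ s) :
    ∃ f : ℕ → α, Set.BijOn f (Set.Iio s.card) s ∧ f 0 = p ∧ IsFarthestFirst s.card f := by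
  classical
  induction hn : s.card generalizing s p with
  | zero => exact absurd hn (Finset.card_ne_zero_of_mem hp)
  | succ n ih =>
    have hcard : (s.erase p).card = n := by rw [Finset.card_erase_of_mem hp, hn, Nat.add_sub_cancel]
    have hs : (s : Set α) = insert p ↑(s.erase p) := by
      rw [← Finset.coe_insert, Finset.insert_erase hp]
    suffices ∃ g : ℕ → α, Set.BijOn g (Set.Iio n) ↑(s.erase p) ∧ IsFarthestFirst n g ∧
        ∀ j < n, dist p (g j) ≤ dist p (g 0) by
      obtain ⟨g, hg_bij, hg_greedy, hg_max⟩ := this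
      exact ⟨prepend p g, hs ▸ bijOn_prepend hg_bij (by simp), rfl, hg_greedy.prepend hg_max⟩
    obtain hempty | hne := (s.erase p).eq_empty_or_nonempty
    · obtain rfl : n = 0 := by rw [← hcard, hempty, Finset.card_empty]
      exact ⟨fun _ ↦ p, by simp [hempty, IsFarthestFirst]⟩
    · obtain ⟨q, hq, hq_max⟩ := (s.erase p).exists_max_image (dist p) hne
      obtain ⟨g, hg_bij, rfl, hg_greedy⟩ := ih (s.erase p) hq hcard
      exact ⟨g, hg_bij, hg_greedy, fun j hj ↦ hq_max _ (hg_bij.mapsTo hj)⟩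

section Angle

variable {V P : Type*} [NormedAddCommGroup V] [InnerProductSpace ℝ V] [MetricSpace P]
  [NormedAddTorsor V P]

theorem angle_le_pi_div_two_of_inner_nonneg {x y : V} (h : 0 ≤ inner ℝ x y) :
    InnerProductGeometry.angle x y ≤ π / 2 :=
  Real.arccos_le_pi_div_two.mpr (by positivity)

theorem angle_le_pi_div_two_of_dist_le {a b c : P} (h : dist a c ≤ dist a b) :
    ∠ a b c ≤ π / 2 := by
  have hb : b ∈ (⟨a, dist a b⟩ : Sphere P) := mem_sphere'.mpr rfl
  have hinner : 0 ≤ inner ℝ (b -ᵥ c) (b -ᵥ a) :=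
    inner_nonneg_of_dist_le_radius hb (by rwa [dist_comm])
  apply angle_le_pi_div_two_of_inner_nonneg
  rwa [← neg_vsub_eq_vsub_rev b a, ← neg_vsub_eq_vsub_rev b c, inner_neg_neg, real_inner_comm]

theorem IsFarthestFirst.angle_le_pi_div_two {n : ℕ} {f : ℕ → P} (hf : IsFarthestFirst n f) {i : ℕ}
    (hi : i + 2 < n) : ∠ (f i) (f (i + 1)) (f (i + 2)) ≤ π / 2 :=
  angle_le_pi_div_two_of_dist_le (hf i (i + 2) (by lia) hi)

theorem acute_spanning_path_via_farthest_point_general :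
    (∀ (n : ℕ) (f : ℕ → P), IsFarthestFirst n f →
      ∀ i : ℕ, i + 2 < n → ∠ (f i) (f (i + 1)) (f (i + 2)) ≤ π / 2) ∧
    (∀ S : Finset P, ∀ p ∈ S, ∃ f : ℕ → P, Set.BijOn f (Set.Iio S.card) S ∧ f 0 = p ∧
      IsFarthestFirst S.card f) :=
  ⟨fun _ _ hf _ hi ↦ hf.angle_le_pi_div_two hi, fun S _ hp ↦ exists_isFarthestFirst_bijOn S hp⟩

end Angle

/-- Every set of `n ≥ 2` points in the plane admits an acute spanning path, and such a path
can be obtained greedily: starting from an arbitrary point of `S` and iteratively connecting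
the current point to a point farthest from it among the remaining points. Concretely:
(1) every greedy ordering of `S` (one in which each point is at least as far from its
predecessor as all later points are) is an acute spanning path, and
(2) from every starting point of `S` there is such a greedy ordering. -/
theorem acute_spanning_path_via_farthest_point
    (n : ℕ) (hn : 2 ≤ n) (S : Finset Plane) (hcard : S.card = n) :
    (∀ f : ℕ → Plane, Set.InjOn f (Set.Iio n) → f '' Set.Iio n = ↑S →
      (∀ i j : ℕ, i < j → j < n → dist (f i) (f j) ≤ dist (f i) (f (i + 1))) →
      ∀ i : ℕ, i + 2 < n →
        EuclideanGeometry.angle (f i) (f (i + 1)) (f (i + 2)) ≤ π / 2) ∧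
    (∀ p ∈ S, ∃ f : ℕ → Plane, Set.InjOn f (Set.Iio n) ∧ f '' Set.Iio n = ↑S ∧ f 0 = p ∧
      ∀ i j : ℕ, i < j → j < n → dist (f i) (f j) ≤ dist (f i) (f (i + 1))) := by
  subst hcard
  obtain ⟨hacute, hexists⟩ := acute_spanning_path_via_farthest_point_general (P := Plane)
  refine ⟨fun f _ _ ↦ hacute _ f, fun p hp ↦ ?_⟩
  obtain ⟨f, hf_bij, hf_zero, hf_greedy⟩ := hexists S p hp
  exact ⟨f, hf_bij.injOn, hf_bij.image_eq, hf_zero, hf_greedy⟩
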